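/- Let S = {x ∈ ℝ³ : ‖x‖ = 1} be the Euclidean unit sphere, viewed as a metric space with the Euclidean distance, and let A ⊆ S be any six-element set. Then there exist three pairwise disjoint open metric balls B₁, B₂, B₃ of the metric space S such that B_j ∩ A has exactly two elements for each j ∈ {1, 2, 3}. -/

import Mathlib

open Metric

/-!
Caps of the sphere are permuted by its Möbius transformations, so the six points may first be
moved by the maps `mobius y` (`‖y‖ < 1`) into a *balanced* position, one where the points add up
to `0`. A suitable `y` is a minimum of the function `∑ log ‖xᵢ - y‖² - 6 log (1 - ‖y‖²)`, which
blows up at the boundary of the unit ball because the points are distinct; the vanishing of its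
gradient is exactly the balance condition (`exists_balanced`).

For a balanced configuration take a perfect matching `ab`, `cd`, `ef` maximizing the sum of the
three inner products, that is, minimizing the sum of the squared lengths. To the pair `ab` belongs
the affine function `x ↦ ⟪x, a + b⟫ - (1 + ⟪a, b⟫)`, vanishing at `a` and `b` and positive on the
cap with diameter `ab`. Since `a + b + c + d = -(e + f)`, the functions of `ab` and `cd` add up to
at most `‖e + f‖ - (2 + ⟪a, b⟫ + ⟪c, d⟫)` on the sphere. Optimality of the matching gives
`‖e + f‖² ≤ 4 + 6 (⟪a, b⟫ + ⟪c, d⟫)`, and as `‖e + f‖ < 2` this makes the bound negative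
(`norm_add_lt_of_optimal`). Hence for small `ε > 0` the three sets where these functions exceed
`-ε` are pairwise disjoint. Each contains its own pair, so none contains a further point, and
pulling them back by `mobius y` gives open metric balls.
-/

open scoped InnerProductSpace

section Caps

variable {E : Type*} [NormedAddCommGroup E] [InnerProductSpace ℝ E]

/-- The conformal automorphism of the unit sphere attached to a point `y` of the open unit ball:
the inversion centred at `y` of radius `√(1 - ‖y‖²)` followed by the translation by `-2y`. -/
noncomputable def mobius (y x : E) : E :=
  ((1 - ‖y‖ ^ 2) / ‖x - y‖ ^ 2) • (x - y) - y

lemma norm_sub_sq_pos {F : Type*} [NormedAddCommGroup F] {x y : F} (hx : ‖x‖ = 1) (hy : ‖y‖ < 1) : 0 < ‖x - y‖ ^ 2 := by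
  have : x - y ≠ 0 := by
    intro h
    rw [sub_eq_zero.mp h] at hx
    linarith
  positivity

lemma norm_mobius {x y : E} (hx : ‖x‖ = 1) (hy : ‖y‖ < 1) : ‖mobius y x‖ = 1 := by
  have hD := norm_sub_sq_pos hx hy
  have hp : ⟪x, y⟫_ℝ = (1 + ‖y‖ ^ 2 - ‖x - y‖ ^ 2) / 2 := by
    rw [norm_sub_sq_real, hx]; ring
  have h : ‖mobius y x‖ ^ 2 = 1 := by
    unfold mobius
    rw [norm_sub_sq_real, norm_smul, mul_pow, Real.norm_eq_abs, sq_abs, inner_smul_left,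
      inner_sub_left, real_inner_self_eq_norm_sq]
    simp only [conj_trivial]
    rw [hp]
    generalize ‖x - y‖ ^ 2 = D at hD
    field_simp
    ring
  nlinarith [norm_nonneg (mobius y x)]

lemma mobius_injective {x z y : E} (hy : ‖y‖ < 1)
    (h : mobius y x = mobius y z) : x = z := by
  have hR : Real.sqrt (1 - ‖y‖ ^ 2) ≠ 0 := by
    have : 0 < 1 - ‖y‖ ^ 2 := by nlinarith [norm_nonneg y]
    positivity
  apply EuclideanGeometry.inversion_injective y hR
  have h0 : (0 : ℝ) ≤ 1 - ‖y‖ ^ 2 := by nlinarith [norm_nonneg y]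
  have := congrArg (fun v => v + y + y) h
  simpa [mobius, EuclideanGeometry.inversion, div_pow, Real.sq_sqrt h0, dist_eq_norm] using this

/-- A nonempty section of the sphere by a proper open half-space is an open ball. -/
lemma exists_ball_eq (n : E) (h : ℝ) {p q : E} (hp : ‖p‖ = 1)
    (hnp : h < ⟪n, p⟫_ℝ) (hnq : ⟪n, q⟫_ℝ ≤ h) :
    ∃ (x : sphere (0 : E) 1) (r : ℝ), 0 < r ∧
      ∀ z : sphere (0 : E) 1, z ∈ ball x r ↔ h < ⟪n, (z : E)⟫_ℝ := by
  have hn : n ≠ 0 := by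
    rintro rfl
    simp at hnp hnq
    linarith
  have hn' : 0 < ‖n‖ := norm_pos_iff.mpr hn
  have hlt : h < ‖n‖ := by
    have := real_inner_le_norm n p
    rw [hp, mul_one] at this
    linarith
  have hpos : 0 < 2 - 2 * (h / ‖n‖) := by
    have : h / ‖n‖ < 1 := by rwa [div_lt_one hn']
    linarith
  have hu : ‖‖n‖⁻¹ • n‖ = 1 := by
    rw [norm_smul, norm_inv, norm_norm, inv_mul_cancel₀ hn'.ne']
  refine ⟨⟨‖n‖⁻¹ • n, by simpa using hu⟩, Real.sqrt (2 - 2 * (h / ‖n‖)),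
    Real.sqrt_pos.mpr hpos, fun z => ?_⟩
  have hz : ‖(z : E)‖ = 1 := by simp
  rw [mem_ball, Subtype.dist_eq]
  change dist (z : E) (‖n‖⁻¹ • n) < _ ↔ _
  rw [dist_eq_norm, Real.lt_sqrt (norm_nonneg _), norm_sub_sq_real, hz,
    hu, real_inner_comm, inner_smul_left]
  simp only [conj_trivial]
  rw [div_eq_inv_mul]
  constructor
  · intro H
    have : ‖n‖⁻¹ * h < ‖n‖⁻¹ * ⟪n, (z : E)⟫_ℝ := by linarith
    exact lt_of_mul_lt_mul_left this (by positivity)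
  · intro H
    have : ‖n‖⁻¹ * h < ‖n‖⁻¹ * ⟪n, (z : E)⟫_ℝ := mul_lt_mul_of_pos_left H (by positivity)
    linarith

/-- The preimage of a cap under `mobius y` is again an open ball of the sphere. -/
lemma exists_ball_mobius {y : E} (hy : ‖y‖ < 1) (s : E) (k : ℝ) {p q : E}
    (hp : ‖p‖ = 1) (hq : ‖q‖ = 1)
    (hnp : k < ⟪mobius y p, s⟫_ℝ) (hnq : ⟪mobius y q, s⟫_ℝ ≤ k) :
    ∃ (x : sphere (0 : E) 1) (r : ℝ), 0 < r ∧
      ∀ z : sphere (0 : E) 1, z ∈ ball x r ↔ k < ⟪mobius y z, s⟫_ℝ := by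
  -- Clearing the denominator `‖z - y‖²`, which is affine in `z` on the sphere, turns the
  -- condition on `mobius y z` into an affine one on `z`.
  have key : ∀ z : E, ‖z‖ = 1 → (k < ⟪mobius y z, s⟫_ℝ ↔
      (1 - ‖y‖ ^ 2) * ⟪y, s⟫_ℝ + (⟪y, s⟫_ℝ + k) * (1 + ‖y‖ ^ 2) <
        ⟪(1 - ‖y‖ ^ 2) • s + (2 * (⟪y, s⟫_ℝ + k)) • y, z⟫_ℝ) := by
    intro z hz
    have hD := norm_sub_sq_pos hz hy
    have hDe : ‖z - y‖ ^ 2 = 1 - 2 * ⟪z, y⟫_ℝ + ‖y‖ ^ 2 := by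
      rw [norm_sub_sq_real, hz]; ring
    have e1 : ⟪mobius y z, s⟫_ℝ =
        (1 - ‖y‖ ^ 2) * (⟪z, s⟫_ℝ - ⟪y, s⟫_ℝ) / ‖z - y‖ ^ 2 - ⟪y, s⟫_ℝ := by
      unfold mobius
      rw [inner_sub_left, inner_smul_left, inner_sub_left]
      simp only [conj_trivial]
      ring
    have e2 : k < ⟪mobius y z, s⟫_ℝ ↔
        (⟪y, s⟫_ℝ + k) * ‖z - y‖ ^ 2 < (1 - ‖y‖ ^ 2) * (⟪z, s⟫_ℝ - ⟪y, s⟫_ℝ) := by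
      rw [e1, ← lt_div_iff₀ hD]
      constructor <;> intro H <;> linarith
    rw [e2, hDe, inner_add_left, inner_smul_left, inner_smul_left, real_inner_comm z s,
      real_inner_comm z y]
    simp only [conj_trivial]
    constructor <;> intro H <;> linarith
  obtain ⟨x, r, hr, H⟩ := exists_ball_eq _ _ hp ((key p hp).mp hnp)
    (not_lt.mp fun h => absurd ((key q hq).mpr h) (not_lt.mpr hnq))
  exact ⟨x, r, hr, fun z => (H z).trans (key z (by simp)).symm⟩

/-- Among balanced unit vectors, if exchanging partners between the pairs `ab` and `cd` does not
increase the sum of the inner products, then the caps with diameters `ab` and `cd` are disjoint: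
by this inequality the sum of their defining affine functions is negative on the sphere. -/
lemma norm_add_lt_of_optimal {a b c d e f : E} (ha : ‖a‖ = 1) (hb : ‖b‖ = 1) (hc : ‖c‖ = 1)
    (hd : ‖d‖ = 1) (he : ‖e‖ = 1) (hf : ‖f‖ = 1) (hef : e ≠ f)
    (hsum : a + b + (c + d) + (e + f) = 0)
    (h1 : ⟪a, c⟫_ℝ + ⟪b, d⟫_ℝ ≤ ⟪a, b⟫_ℝ + ⟪c, d⟫_ℝ)
    (h2 : ⟪a, d⟫_ℝ + ⟪b, c⟫_ℝ ≤ ⟪a, b⟫_ℝ + ⟪c, d⟫_ℝ) :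
    ‖e + f‖ < (1 + ⟪a, b⟫_ℝ) + (1 + ⟪c, d⟫_ℝ) := by
  have hs : ‖e + f‖ < 2 := by
    have h : ⟪e, f⟫_ℝ < 1 := by
      refine lt_of_le_of_ne ?_ fun h => hef ((inner_eq_one_iff_of_norm_eq_one he hf).mp h)
      simpa [he, hf] using real_inner_le_norm e f
    have := norm_add_sq_real e f
    rw [he, hf] at this
    nlinarith [norm_nonneg (e + f)]
  have hn : ‖e + f‖ ^ 2 = ‖a + b + (c + d)‖ ^ 2 := by
    rw [eq_neg_of_add_eq_zero_left hsum, norm_neg]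
  rw [norm_add_sq_real (a + b), norm_add_sq_real a, norm_add_sq_real c, inner_add_left,
    inner_add_right, inner_add_right, ha, hb, hc, hd] at hn
  nlinarith [norm_nonneg (e + f)]

lemma exists_separation {F ι : Type*} [NormedAddCommGroup F] [Finite ι] {x : ι → F} (hx : Function.Injective x) :
    ∃ c : ℝ, 0 < c ∧ ∀ i j, i ≠ j → 2 * c ≤ ‖x i - x j‖ := by
  classical
  cases nonempty_fintype ι
  rcases (Finset.univ : Finset ι).offDiag.eq_empty_or_nonempty with h | h
  · refine ⟨1, one_pos, fun i j hij => absurd (h ▸ ?_ : (i, j) ∈ (∅ : Finset (ι × ι))) (by simp)⟩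
    simpa using hij
  · obtain ⟨p, hp, hmin⟩ := Finset.exists_min_image _ (fun p : ι × ι => ‖x p.1 - x p.2‖) h
    have hne : x p.1 - x p.2 ≠ 0 := sub_ne_zero.mpr fun h => (Finset.mem_offDiag.mp hp).2.2 (hx h)
    refine ⟨‖x p.1 - x p.2‖ / 2, by positivity, fun i j hij => ?_⟩
    have := hmin (i, j) (by simpa using hij)
    simp only at this
    linarith

/-- The function whose critical points in the unit ball balance the points `x i`. -/
noncomputable def energy (x : Fin 6 → E) (y : E) : ℝ :=
  ∑ i, Real.log (‖x i - y‖ ^ 2) - 6 * Real.log (1 - ‖y‖ ^ 2)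

lemma hasDerivAt_energy {x : Fin 6 → E} (hx : ∀ i, ‖x i‖ = 1) {y : E} (hy : ‖y‖ < 1) (w : E) :
    HasDerivAt (fun t : ℝ => energy x (y + t • w))
      (-2 / (1 - ‖y‖ ^ 2) * ⟪∑ i, mobius y (x i), w⟫_ℝ) 0 := by
  have hq : 0 < 1 - ‖y‖ ^ 2 := by nlinarith [norm_nonneg y]
  have hl : HasDerivAt (fun t : ℝ => y + t • w) w 0 := by
    simpa using ((hasDerivAt_id (0 : ℝ)).smul_const w).const_add y
  have h1 : ∀ i, HasDerivAt (fun t : ℝ => Real.log (‖x i - (y + t • w)‖ ^ 2))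
      (2 * ⟪x i - y, -w⟫_ℝ / ‖x i - y‖ ^ 2) 0 := by
    intro i
    have := ((hl.const_sub (x i)).norm_sq).log
      (by simpa using (norm_sub_sq_pos (hx i) hy).ne')
    simpa using this
  have h2 : HasDerivAt (fun t : ℝ => Real.log (1 - ‖y + t • w‖ ^ 2))
      (-(2 * ⟪y, w⟫_ℝ) / (1 - ‖y‖ ^ 2)) 0 := by
    have := ((hl.norm_sq).const_sub 1).log (by simpa using hq.ne')
    simpa using this
  have h3 := (HasDerivAt.fun_sum fun i (_ : i ∈ Finset.univ) => h1 i).sub (h2.const_mul 6)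
  refine h3.congr_deriv ?_
  have h4 : ∀ i, ⟪mobius y (x i), w⟫_ℝ =
      -(1 - ‖y‖ ^ 2) / 2 * (2 * ⟪x i - y, -w⟫_ℝ / ‖x i - y‖ ^ 2) - ⟪y, w⟫_ℝ := by
    intro i
    unfold mobius
    rw [inner_sub_left, inner_smul_left, inner_neg_right]
    simp only [conj_trivial]
    ring
  rw [sum_inner, Finset.sum_congr rfl fun i _ => h4 i, Finset.sum_sub_distrib, ← Finset.mul_sum]
  simp only [Finset.sum_const, Finset.card_univ, Fintype.card_fin, nsmul_eq_mul]
  field_simp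
  push_cast
  ring

/-- Six distinct points of the sphere can be balanced by a conformal automorphism. -/
lemma exists_balanced [FiniteDimensional ℝ E] {x : Fin 6 → E} (hx : ∀ i, ‖x i‖ = 1)
    (hinj : Function.Injective x) : ∃ y : E, ‖y‖ < 1 ∧ ∑ i, mobius y (x i) = 0 := by
  obtain ⟨c, hc, hsep⟩ := exists_separation hinj
  -- At distance `δ` from the boundary at most one factor `‖xᵢ - y‖` is below `c`, so the energy
  -- is at least `10 log c - 6 log 2 - 4 log δ`.
  set K : ℝ := 6 * Real.log 2 - 10 * Real.log c with hK
  set δ : ℝ := min (1 / 2) (Real.exp (-K / 4 - 1)) with hδ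
  have hδ0 : 0 < δ := lt_min (by norm_num) (Real.exp_pos _)
  have hδ1 : δ ≤ 1 / 2 := min_le_left _ _
  have hlogδ : Real.log δ ≤ -K / 4 - 1 := by
    rw [Real.log_le_iff_le_exp hδ0]
    exact min_le_right _ _
  have hbd : ∀ y : E, ‖y‖ = 1 - δ → 0 < energy x y := by
    intro y hy
    have hlow : ∀ i, δ ≤ ‖x i - y‖ := by
      intro i
      have := norm_sub_norm_le (x i) y
      rw [hx, hy] at this
      linarith
    obtain ⟨i₀, hi₀⟩ : ∃ i₀, ∀ j, j ≠ i₀ → c ≤ ‖x j - y‖ := by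
      by_cases h : ∃ i₀, ‖x i₀ - y‖ < c
      · obtain ⟨i₀, h⟩ := h
        refine ⟨i₀, fun j hj => ?_⟩
        have h1 := hsep j i₀ hj
        have h2 := norm_sub_le_norm_sub_add_norm_sub (x j) y (x i₀)
        rw [norm_sub_rev y] at h2
        linarith
      · push Not at h
        exact ⟨0, fun j _ => h j⟩
    have h1 : ∑ i ∈ Finset.univ.erase i₀, Real.log (‖x i - y‖ ^ 2) ≥ 5 * (2 * Real.log c) := by
      have := Finset.card_nsmul_le_sum (Finset.univ.erase i₀)
        (fun i => Real.log (‖x i - y‖ ^ 2)) (2 * Real.log c) (by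
          intro i hi
          rw [Real.log_pow]
          have := Real.log_le_log hc (hi₀ i (Finset.ne_of_mem_erase hi))
          push_cast
          linarith)
      simpa using this
    have h2 : 2 * Real.log δ ≤ Real.log (‖x i₀ - y‖ ^ 2) := by
      rw [Real.log_pow]
      have := Real.log_le_log hδ0 (hlow i₀)
      push_cast
      linarith
    have h3 : Real.log (1 - ‖y‖ ^ 2) ≤ Real.log 2 + Real.log δ := by
      rw [← Real.log_mul (by norm_num) hδ0.ne', hy]
      apply Real.log_le_log <;> nlinarith
    have h4 := Finset.add_sum_erase Finset.univ (fun i => Real.log (‖x i - y‖ ^ 2))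
      (Finset.mem_univ i₀)
    unfold energy
    linarith
  have hcont : ContinuousOn (energy x) (closedBall 0 (1 - δ)) := by
    intro y hy
    have hy1 : ‖y‖ < 1 := by
      have : ‖y‖ ≤ 1 - δ := by simpa using hy
      linarith
    have hq : 1 - ‖y‖ ^ 2 ≠ 0 := by nlinarith [norm_nonneg y]
    have hp : ∀ i, ‖x i - y‖ ^ 2 ≠ 0 := fun i => (norm_sub_sq_pos (hx i) hy1).ne'
    apply ContinuousAt.continuousWithinAt
    unfold energy
    refine ContinuousAt.sub (tendsto_finsetSum _ fun i _ => ?_) ?_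
    · exact ContinuousAt.log (by fun_prop) (hp i)
    · exact continuousAt_const.mul (ContinuousAt.log (by fun_prop) hq)
  obtain ⟨y, hy, hmin⟩ := (isCompact_closedBall (0 : E) (1 - δ)).exists_isMinOn
    ⟨0, by simp; linarith⟩ hcont
  have hy' : ‖y‖ ≤ 1 - δ := by simpa using hy
  have h0 : energy x y ≤ 0 := by
    have : energy x y ≤ energy x 0 := hmin (by simp; linarith)
    simpa [energy, hx] using this
  have hylt : ‖y‖ < 1 - δ := lt_of_le_of_ne hy' fun h => absurd (hbd y h) (not_lt.mpr h0)
  have hy1 : ‖y‖ < 1 := by linarith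
  refine ⟨y, hy1, ?_⟩
  have hloc : IsLocalMin (energy x) y :=
    hmin.isLocalMin (closedBall_mem_nhds_of_mem (by simpa using hylt))
  set w := ∑ i, mobius y (x i) with hw
  have hd := hasDerivAt_energy hx hy1 w
  have hlocline : IsLocalMin (fun t : ℝ => energy x (y + t • w)) 0 := by
    have ht : Filter.Tendsto (fun t : ℝ => y + t • w) (nhds 0) (nhds y) := by
      have : Continuous (fun t : ℝ => y + t • w) := by fun_prop
      simpa using this.tendsto 0
    have := ht.eventually hloc
    simpa [IsLocalMin, IsMinFilter] using this
  have hz := hlocline.hasDerivAt_eq_zero hd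
  have hq : 0 < 1 - ‖y‖ ^ 2 := by nlinarith [norm_nonneg y]
  rw [← hw, real_inner_self_eq_norm_sq, mul_eq_zero] at hz
  rcases hz with hz | hz
  · exact absurd hz (div_neg_of_neg_of_pos (by norm_num) hq).ne
  · simpa using hz

/-- A matching of six vectors, encoded by a permutation `σ` as the pairs `σ 0 σ 1`, `σ 2 σ 3`,
`σ 4 σ 5`, with maximal sum of inner products; the conclusion compares it with the six matchings
obtained by exchanging partners between two of its pairs. -/
lemma exists_optimal_matching (v : Fin 6 → E) : ∃ σ : Equiv.Perm (Fin 6),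
    ⟪v (σ 0), v (σ 2)⟫_ℝ + ⟪v (σ 1), v (σ 3)⟫_ℝ ≤ ⟪v (σ 0), v (σ 1)⟫_ℝ + ⟪v (σ 2), v (σ 3)⟫_ℝ ∧
    ⟪v (σ 0), v (σ 3)⟫_ℝ + ⟪v (σ 1), v (σ 2)⟫_ℝ ≤ ⟪v (σ 0), v (σ 1)⟫_ℝ + ⟪v (σ 2), v (σ 3)⟫_ℝ ∧
    ⟪v (σ 0), v (σ 4)⟫_ℝ + ⟪v (σ 1), v (σ 5)⟫_ℝ ≤ ⟪v (σ 0), v (σ 1)⟫_ℝ + ⟪v (σ 4), v (σ 5)⟫_ℝ ∧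
    ⟪v (σ 0), v (σ 5)⟫_ℝ + ⟪v (σ 1), v (σ 4)⟫_ℝ ≤ ⟪v (σ 0), v (σ 1)⟫_ℝ + ⟪v (σ 4), v (σ 5)⟫_ℝ ∧
    ⟪v (σ 2), v (σ 4)⟫_ℝ + ⟪v (σ 3), v (σ 5)⟫_ℝ ≤ ⟪v (σ 2), v (σ 3)⟫_ℝ + ⟪v (σ 4), v (σ 5)⟫_ℝ ∧
    ⟪v (σ 2), v (σ 5)⟫_ℝ + ⟪v (σ 3), v (σ 4)⟫_ℝ ≤
      ⟪v (σ 2), v (σ 3)⟫_ℝ + ⟪v (σ 4), v (σ 5)⟫_ℝ := by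
  obtain ⟨σ, hσ⟩ := Finite.exists_max (fun σ : Equiv.Perm (Fin 6) =>
    ⟪v (σ 0), v (σ 1)⟫_ℝ + ⟪v (σ 2), v (σ 3)⟫_ℝ + ⟪v (σ 4), v (σ 5)⟫_ℝ)
  have hs : ∀ i j k : Fin 6, (σ * Equiv.swap i j) k =
      σ (if k = i then j else if k = j then i else k) :=
    fun i j k => by rw [Equiv.Perm.mul_apply, Equiv.swap_apply_def]
  have h12 := hσ (σ * Equiv.swap 1 2)
  have h13 := hσ (σ * Equiv.swap 1 3)
  have h14 := hσ (σ * Equiv.swap 1 4)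
  have h15 := hσ (σ * Equiv.swap 1 5)
  have h34 := hσ (σ * Equiv.swap 3 4)
  have h35 := hσ (σ * Equiv.swap 3 5)
  simp only [hs, Fin.reduceEq, if_true, if_false] at h12 h13 h14 h15 h34 h35
  refine ⟨σ, ?_, ?_, ?_, ?_, ?_, ?_⟩ <;>
    linarith [real_inner_comm (v (σ 1)) (v (σ 2)), real_inner_comm (v (σ 1)) (v (σ 4)),
      real_inner_comm (v (σ 3)) (v (σ 4)), real_inner_comm (v (σ 2)) (v (σ 1)),
      real_inner_comm (v (σ 3)) (v (σ 2)), real_inner_comm (v (σ 5)) (v (σ 4))]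

end Caps

theorem six_points_on_sphere (A : Set (Metric.sphere (0 : EuclideanSpace ℝ (Fin 3)) 1))
    (hA : A.ncard = 6) :
    ∃ (x₁ x₂ x₃ : Metric.sphere (0 : EuclideanSpace ℝ (Fin 3)) 1) (r₁ r₂ r₃ : ℝ),
      0 < r₁ ∧ 0 < r₂ ∧ 0 < r₃ ∧
      Disjoint (Metric.ball x₁ r₁) (Metric.ball x₂ r₂) ∧
      Disjoint (Metric.ball x₁ r₁) (Metric.ball x₃ r₃) ∧
      Disjoint (Metric.ball x₂ r₂) (Metric.ball x₃ r₃) ∧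
      (Metric.ball x₁ r₁ ∩ A).ncard = 2 ∧
      (Metric.ball x₂ r₂ ∩ A).ncard = 2 ∧
      (Metric.ball x₃ r₃ ∩ A).ncard = 2 := by
  obtain ⟨p, hpinj, hpA⟩ : ∃ p : Fin 6 → sphere (0 : EuclideanSpace ℝ (Fin 3)) 1,
      Function.Injective p ∧ Set.range p = A := by
    have hfin : Finite A := Set.finite_of_ncard_ne_zero (by omega)
    have e : Fin 6 ≃ A := (Finite.equivFinOfCardEq hA).symm
    refine ⟨fun i => (e i : _), Subtype.val_injective.comp e.injective, ?_⟩
    ext z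
    constructor
    · rintro ⟨i, rfl⟩
      exact (e i).2
    · intro hz
      exact ⟨e.symm ⟨z, hz⟩, by simp⟩
  have hp1 : ∀ z : sphere (0 : EuclideanSpace ℝ (Fin 3)) 1, ‖(z : EuclideanSpace ℝ (Fin 3))‖ = 1 :=
    fun z => by simp
  obtain ⟨y, hy, hbal⟩ := exists_balanced (x := fun i => (p i : EuclideanSpace ℝ (Fin 3)))
    (fun i => hp1 _) (Subtype.val_injective.comp hpinj)
  obtain ⟨σ, h1, h2, h3, h4, h5, h6⟩ :=
    exists_optimal_matching (fun i => mobius y (p i : EuclideanSpace ℝ (Fin 3)))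
  have hbal' : ∑ i, mobius y (p (σ i) : EuclideanSpace ℝ (Fin 3)) = 0 := by
    refine Eq.trans ?_ hbal
    exact Equiv.sum_comp σ (fun i => mobius y (p i : EuclideanSpace ℝ (Fin 3)))
  set v : Fin 6 → EuclideanSpace ℝ (Fin 3) := fun i => mobius y (p (σ i)) with hv
  have hv1 : ∀ i, ‖v i‖ = 1 := fun i => norm_mobius (hp1 _) hy
  have hvne : ∀ i j, i ≠ j → v i ≠ v j := fun i j hij h =>
    hij (σ.injective (hpinj (Subtype.val_injective (mobius_injective hy h))))
  simp only [Fin.sum_univ_six] at hbal'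
  change v 0 + v 1 + v 2 + v 3 + v 4 + v 5 = 0 at hbal'
  have k12 := norm_add_lt_of_optimal (hv1 0) (hv1 1) (hv1 2) (hv1 3) (hv1 4) (hv1 5)
    (hvne _ _ (by decide)) (by rw [← hbal']; abel) h1 h2
  have k13 := norm_add_lt_of_optimal (hv1 0) (hv1 1) (hv1 4) (hv1 5) (hv1 2) (hv1 3)
    (hvne _ _ (by decide)) (by rw [← hbal']; abel) h3 h4
  have k23 := norm_add_lt_of_optimal (hv1 2) (hv1 3) (hv1 4) (hv1 5) (hv1 0) (hv1 1)
    (hvne _ _ (by decide)) (by rw [← hbal']; abel) h5 h6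
  set t₁ := 1 + ⟪v 0, v 1⟫_ℝ with ht₁
  set t₂ := 1 + ⟪v 2, v 3⟫_ℝ with ht₂
  set t₃ := 1 + ⟪v 4, v 5⟫_ℝ with ht₃
  obtain ⟨ε, hε, e12, e13, e23⟩ : ∃ ε : ℝ, 0 < ε ∧ ‖v 4 + v 5‖ + 2 * ε ≤ t₁ + t₂ ∧
      ‖v 2 + v 3‖ + 2 * ε ≤ t₁ + t₃ ∧ ‖v 0 + v 1‖ + 2 * ε ≤ t₂ + t₃ := by
    refine ⟨min (t₁ + t₂ - ‖v 4 + v 5‖) (min (t₁ + t₃ - ‖v 2 + v 3‖)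
      (t₂ + t₃ - ‖v 0 + v 1‖)) / 2, ?_, ?_, ?_, ?_⟩
    · have : 0 < min (t₁ + t₂ - ‖v 4 + v 5‖) (min (t₁ + t₃ - ‖v 2 + v 3‖)
        (t₂ + t₃ - ‖v 0 + v 1‖)) := lt_min (by linarith) (lt_min (by linarith) (by linarith))
      linarith
    · have := min_le_left (t₁ + t₂ - ‖v 4 + v 5‖) (min (t₁ + t₃ - ‖v 2 + v 3‖)
        (t₂ + t₃ - ‖v 0 + v 1‖))
      linarith
    · have := (min_le_right (t₁ + t₂ - ‖v 4 + v 5‖) (min (t₁ + t₃ - ‖v 2 + v 3‖)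
        (t₂ + t₃ - ‖v 0 + v 1‖))).trans (min_le_left _ _)
      linarith
    · have := (min_le_right (t₁ + t₂ - ‖v 4 + v 5‖) (min (t₁ + t₃ - ‖v 2 + v 3‖)
        (t₂ + t₃ - ‖v 0 + v 1‖))).trans (min_le_right _ _)
      linarith
  -- No unit vector lies in two of the enlarged caps `t - ε < ⟪u, s⟫`.
  have sep : ∀ (s s' s'' u : EuclideanSpace ℝ (Fin 3)) (t t' : ℝ), s + s' + s'' = 0 →
      ‖s''‖ + 2 * ε ≤ t + t' → ‖u‖ = 1 → t - ε < ⟪u, s⟫_ℝ → t' - ε < ⟪u, s'⟫_ℝ → False := by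
    intro s s' s'' u t t' h0 hle hu ha hb
    have h := real_inner_le_norm u (s + s')
    rw [eq_neg_of_add_eq_zero_left h0, norm_neg, hu, one_mul, ← eq_neg_of_add_eq_zero_left h0,
      inner_add_right] at h
    linarith
  have on_cap : ∀ a b : EuclideanSpace ℝ (Fin 3), ‖a‖ = 1 → ‖b‖ = 1 →
      1 + ⟪a, b⟫_ℝ - ε < ⟪a, a + b⟫_ℝ ∧ 1 + ⟪a, b⟫_ℝ - ε < ⟪b, a + b⟫_ℝ := by
    intro a b ha hb
    rw [inner_add_right, inner_add_right, real_inner_self_eq_norm_sq, real_inner_self_eq_norm_sq,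
      ha, hb, real_inner_comm a b]
    constructor <;> linarith
  obtain ⟨m0, m1⟩ := on_cap _ _ (hv1 0) (hv1 1)
  obtain ⟨m2, m3⟩ := on_cap _ _ (hv1 2) (hv1 3)
  obtain ⟨m4, m5⟩ := on_cap _ _ (hv1 4) (hv1 5)
  have sum12 : (v 0 + v 1) + (v 2 + v 3) + (v 4 + v 5) = 0 := by rw [← hbal']; abel
  have sum13 : (v 0 + v 1) + (v 4 + v 5) + (v 2 + v 3) = 0 := by rw [← hbal']; abel
  have sum23 : (v 2 + v 3) + (v 4 + v 5) + (v 0 + v 1) = 0 := by rw [← hbal']; abel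
  obtain ⟨x₁, r₁, hr₁, B₁⟩ := exists_ball_mobius hy (v 0 + v 1) (t₁ - ε)
    (hp1 (p (σ 0))) (hp1 (p (σ 2))) m0
    (not_lt.mp fun h => sep _ _ _ _ _ _ sum12 e12 (hv1 2) h m2)
  obtain ⟨x₂, r₂, hr₂, B₂⟩ := exists_ball_mobius hy (v 2 + v 3) (t₂ - ε)
    (hp1 (p (σ 2))) (hp1 (p (σ 0))) m2
    (not_lt.mp fun h => sep _ _ _ _ _ _ sum12 e12 (hv1 0) m0 h)
  obtain ⟨x₃, r₃, hr₃, B₃⟩ := exists_ball_mobius hy (v 4 + v 5) (t₃ - ε)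
    (hp1 (p (σ 4))) (hp1 (p (σ 0))) m4
    (not_lt.mp fun h => sep _ _ _ _ _ _ sum13 e13 (hv1 0) m0 h)
  have D12 : Disjoint (ball x₁ r₁) (ball x₂ r₂) := Set.disjoint_left.mpr fun z h h' =>
    sep _ _ _ _ _ _ sum12 e12 (norm_mobius (hp1 z) hy) ((B₁ z).mp h) ((B₂ z).mp h')
  have D13 : Disjoint (ball x₁ r₁) (ball x₃ r₃) := Set.disjoint_left.mpr fun z h h' =>
    sep _ _ _ _ _ _ sum13 e13 (norm_mobius (hp1 z) hy) ((B₁ z).mp h) ((B₃ z).mp h')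
  have D23 : Disjoint (ball x₂ r₂) (ball x₃ r₃) := Set.disjoint_left.mpr fun z h h' =>
    sep _ _ _ _ _ _ sum23 e23 (norm_mobius (hp1 z) hy) ((B₂ z).mp h) ((B₃ z).mp h')
  have n0 := (B₁ _).mpr m0
  have n1 := (B₁ _).mpr m1
  have n2 := (B₂ _).mpr m2
  have n3 := (B₂ _).mpr m3
  have n4 := (B₃ _).mpr m4
  have n5 := (B₃ _).mpr m5
  have hAll : ∀ z, z ∈ A ↔ ∃ k, p (σ k) = z := by
    intro z
    rw [← hpA]
    constructor
    · rintro ⟨i, rfl⟩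
      exact ⟨σ.symm i, by simp⟩
    · rintro ⟨k, rfl⟩
      exact ⟨σ k, rfl⟩
  have hne : ∀ i j, i ≠ j → p (σ i) ≠ p (σ j) := fun i j hij h => hij (σ.injective (hpinj h))
  refine ⟨x₁, x₂, x₃, r₁, r₂, r₃, hr₁, hr₂, hr₃, D12, D13, D23, ?_, ?_, ?_⟩
  · rw [Set.ncard_eq_two]
    refine ⟨p (σ 0), p (σ 1), hne _ _ (by decide), Set.Subset.antisymm ?_ ?_⟩
    · rintro z ⟨hz, hzA⟩
      obtain ⟨k, rfl⟩ := (hAll z).mp hzA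
      fin_cases k
      · exact Or.inl rfl
      · exact Or.inr rfl
      · exact (Set.disjoint_left.mp D12 hz n2).elim
      · exact (Set.disjoint_left.mp D12 hz n3).elim
      · exact (Set.disjoint_left.mp D13 hz n4).elim
      · exact (Set.disjoint_left.mp D13 hz n5).elim
    · rintro z (rfl | rfl)
      · exact ⟨n0, (hAll _).mpr ⟨_, rfl⟩⟩
      · exact ⟨n1, (hAll _).mpr ⟨_, rfl⟩⟩
  · rw [Set.ncard_eq_two]
    refine ⟨p (σ 2), p (σ 3), hne _ _ (by decide), Set.Subset.antisymm ?_ ?_⟩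
    · rintro z ⟨hz, hzA⟩
      obtain ⟨k, rfl⟩ := (hAll z).mp hzA
      fin_cases k
      · exact (Set.disjoint_left.mp D12 n0 hz).elim
      · exact (Set.disjoint_left.mp D12 n1 hz).elim
      · exact Or.inl rfl
      · exact Or.inr rfl
      · exact (Set.disjoint_left.mp D23 hz n4).elim
      · exact (Set.disjoint_left.mp D23 hz n5).elim
    · rintro z (rfl | rfl)
      · exact ⟨n2, (hAll _).mpr ⟨_, rfl⟩⟩
      · exact ⟨n3, (hAll _).mpr ⟨_, rfl⟩⟩
  · rw [Set.ncard_eq_two]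
    refine ⟨p (σ 4), p (σ 5), hne _ _ (by decide), Set.Subset.antisymm ?_ ?_⟩
    · rintro z ⟨hz, hzA⟩
      obtain ⟨k, rfl⟩ := (hAll z).mp hzA
      fin_cases k
      · exact (Set.disjoint_left.mp D13 n0 hz).elim
      · exact (Set.disjoint_left.mp D13 n1 hz).elim
      · exact (Set.disjoint_left.mp D23 n2 hz).elim
      · exact (Set.disjoint_left.mp D23 n3 hz).elim
      · exact Or.inl rfl
      · exact Or.inr rfl
    · rintro z (rfl | rfl)
      · exact ⟨n4, (hAll _).mpr ⟨_, rfl⟩⟩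
      · exact ⟨n5, (hAll _).mpr ⟨_, rfl⟩⟩
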